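/- arXiv:1412.5625 — 3 statements merged into one kernel-verified Lean document; each statement's English description precedes it below -/
import Mathlib

section
/- Let φ : M₄(ℝ) → ℂ be continuous with φ(γ·g) = φ(g) for every g ∈ M₄(ℝ) and every integer 4×4 matrix γ of determinant 1, and let w be the integer matrix with rows (1,0,0,0), (0,0,0,−1), (0,0,1,0), (0,1,0,0). Then for every integer m and every g ∈ M₄(ℝ): ∫_{[0,1]⁵} ∫₀¹ φ( n(0,0,x,0,0,0) · w · n(0,u₂,u₃,u₄,u₅,u₆) · g ) · e(−m·x) dx du₂ du₃ du₄ du₅ du₆ = ∫_{[0,1]⁶} φ( n(x₁,x₂,x₃,x₄,x₅,x₆) · g ) · e(−m·x₁) dx₁⋯dx₆. (The degenerate Whittaker vector on the full unipotent N with character on the first simple root is obtained from the minimal-orbit Fourier coefficient F(m;·) by a Weyl translate and unipotent integration; first identity of Table 3 / Appendix A.) -/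
/-! The Weyl element conjugates the root subgroup of the `(1,4)` entry into that of the first
simple root: `n(0,0,x,0,0,0) w = w n(x,0,0,0,0,0)`. Since `w` is an integer matrix of determinant
one, it can be dropped by invariance, and multiplying out leaves `φ` at
`n(x, u₂ + x u₄, u₃ + x u₅, u₄, u₅, u₆) g`. The shears `u₂ + x u₄` and `u₃ + x u₅` are then removed
by invariance under the integer points of `N`. One subtlety is that left translation by `1 + E₁₃`
shifts `x₂` by `1` but also `x₃` by `x₆`, so periodicity in `x₂` only holds after integrating
over `x₃`. Fubini therefore moves the integral over `x₃` innermost; this is `integral_shear_eq`. -/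

open MeasureTheory

/-- `e(t) = exp(2πit)`. -/
noncomputable def e (t : ℝ) : ℂ := Complex.exp (2 * (Real.pi : ℂ) * Complex.I * (t : ℂ))

/-- The upper unitriangular `4×4` matrix with rows `(1,x₁,x₂,x₃)`, `(0,1,x₄,x₅)`,
`(0,0,1,x₆)`, `(0,0,0,1)`. -/
noncomputable def n (x₁ x₂ x₃ x₄ x₅ x₆ : ℝ) : Matrix (Fin 4) (Fin 4) ℝ :=
  !![1, x₁, x₂, x₃; 0, 1, x₄, x₅; 0, 0, 1, x₆; 0, 0, 0, 1]

/-- The Weyl element `w` as an integer matrix of determinant one. -/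
def w : Matrix (Fin 4) (Fin 4) ℤ :=
  !![1, 0, 0, 0; 0, 0, 0, -1; 0, 0, 1, 0; 0, 1, 0, 0]

lemma integral_swap_of_continuous {f : ℝ → ℝ → ℂ} (hf : Continuous fun p : ℝ × ℝ => f p.1 p.2) :
    (∫ y in (0:ℝ)..1, ∫ x in (0:ℝ)..1, f x y) = ∫ x in (0:ℝ)..1, ∫ y in (0:ℝ)..1, f x y := by
  refine (intervalIntegral_intervalIntegral_swap (F := f) ?_).symm
  have hK : IsCompact (Set.uIcc (0:ℝ) 1 ×ˢ Set.uIcc (0:ℝ) 1) := isCompact_uIcc.prod isCompact_uIcc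
  refine (hf.continuousOn.integrableOn_compact hK).mono_set ?_
  exact Set.prod_mono Set.uIoc_subset_uIcc Set.uIoc_subset_uIcc

lemma integral_add_of_periodic {f : ℝ → ℂ} (hf : ∀ t, f (t + 1) = f t) (a : ℝ) :
    (∫ t in (0:ℝ)..1, f (t + a)) = ∫ t in (0:ℝ)..1, f t := by
  have h : Function.Periodic f 1 := hf
  have h2 := h.intervalIntegral_add_eq a 0
  rw [intervalIntegral.integral_comp_add_right]
  simpa [add_comm] using h2

/-- Reversing the order of a triple integral of a continuous function over the unit cube. -/
lemma integral_reverse {F : ℝ → ℝ → ℝ → ℂ}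
    (hF : Continuous fun p : ℝ × ℝ × ℝ => F p.1 p.2.1 p.2.2) :
    (∫ z in (0:ℝ)..1, ∫ y in (0:ℝ)..1, ∫ x in (0:ℝ)..1, F x y z) =
      ∫ x in (0:ℝ)..1, ∫ y in (0:ℝ)..1, ∫ z in (0:ℝ)..1, F x y z := by
  have h1 : ∀ z, (∫ y in (0:ℝ)..1, ∫ x in (0:ℝ)..1, F x y z) =
      ∫ x in (0:ℝ)..1, ∫ y in (0:ℝ)..1, F x y z := fun z =>
    integral_swap_of_continuous (f := fun x y => F x y z)
      (hF.comp (by fun_prop : Continuous fun p : ℝ × ℝ => (p.1, p.2, z)))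
  have h2 : ∀ x, (∫ z in (0:ℝ)..1, ∫ y in (0:ℝ)..1, F x y z) =
      ∫ y in (0:ℝ)..1, ∫ z in (0:ℝ)..1, F x y z := fun x =>
    integral_swap_of_continuous (f := fun y z => F x y z)
      (hF.comp (by fun_prop : Continuous fun p : ℝ × ℝ => (x, p.1, p.2)))
  simp only [h1]
  rw [integral_swap_of_continuous (f := fun x z => ∫ y in (0:ℝ)..1, F x y z)]
  · simp only [h2]
  · exact intervalIntegral.continuous_parametric_intervalIntegral_of_continuous'
      (f := fun (q : ℝ × ℝ) y => F q.1 y q.2) (hF.comp (by fun_prop : Continuous fun q : (ℝ × ℝ) × ℝ => (q.1.1, q.2, q.1.2))) 0 1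

/-- Shearing `y` and `z` by multiples of `x` does not change the integral of a function that is
`1`-periodic in `z` and invariant under the twisted translation `(y, z) ↦ (y + 1, z + c)`. -/
lemma integral_shear_eq {F : ℝ → ℝ → ℝ → ℂ}
    (hF : Continuous fun p : ℝ × ℝ × ℝ => F p.1 p.2.1 p.2.2) (a b c : ℝ)
    (hz : ∀ x y z, F x y (z + 1) = F x y z) (hy : ∀ x y z, F x (y + 1) (z + c) = F x y z) :
    (∫ z in (0:ℝ)..1, ∫ y in (0:ℝ)..1, ∫ x in (0:ℝ)..1, F x (y + x * a) (z + x * b)) =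
      ∫ z in (0:ℝ)..1, ∫ y in (0:ℝ)..1, ∫ x in (0:ℝ)..1, F x y z := by
  rw [integral_reverse hF, integral_reverse (F := fun x y z => F x (y + x * a) (z + x * b))
    (hF.comp (by fun_prop :
      Continuous fun p : ℝ × ℝ × ℝ => (p.1, p.2.1 + p.1 * a, p.2.2 + p.1 * b)))]
  congr 1
  ext x
  simp only [fun y => integral_add_of_periodic (hz x y) (x * b)]
  refine integral_add_of_periodic (f := fun y => ∫ z in (0:ℝ)..1, F x y z) (fun y => ?_) (x * a)
  -- Translating `z` by `c` turns the twisted invariance into plain periodicity in `y`.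
  rw [← integral_add_of_periodic (hz x (y + 1)) c]
  simp only [hy]

lemma continuous_char (m : ℤ) : Continuous fun t : ℝ => e (-(m : ℝ) * t) := by
  unfold e
  fun_prop

lemma continuous_n_row_one (x₄ x₅ x₆ : ℝ) :
    Continuous fun p : ℝ × ℝ × ℝ => n p.1 p.2.1 p.2.2 x₄ x₅ x₆ := by
  refine continuous_matrix fun i j => ?_
  fin_cases i <;> fin_cases j <;> simp [n] <;> fun_prop

lemma weyl_conj (x u₂ u₃ u₄ u₅ u₆ : ℝ) :
    n 0 0 x 0 0 0 * w.map (fun z => (z : ℝ)) * n 0 u₂ u₃ u₄ u₅ u₆ =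
      w.map (fun z => (z : ℝ)) * n x (u₂ + x * u₄) (u₃ + x * u₅) u₄ u₅ u₆ := by
  ext i j
  fin_cases i <;> fin_cases j <;>
    simp [n, w, Matrix.mul_apply, Matrix.vecMul, dotProduct, Fin.sum_univ_four]

lemma det_w : w.det = 1 := by
  decide

lemma elem14_mul (x₁ x₂ x₃ x₄ x₅ x₆ : ℝ) :
    (!![1, 0, 0, 1; 0, 1, 0, 0; 0, 0, 1, 0; 0, 0, 0, 1] : Matrix (Fin 4) (Fin 4) ℤ).map
      (fun z => (z : ℝ)) * n x₁ x₂ x₃ x₄ x₅ x₆ = n x₁ x₂ (x₃ + 1) x₄ x₅ x₆ := by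
  ext i j
  fin_cases i <;> fin_cases j <;>
    simp [n, Matrix.mul_apply, Fin.sum_univ_four]

lemma elem13_mul (x₁ x₂ x₃ x₄ x₅ x₆ : ℝ) :
    (!![1, 0, 1, 0; 0, 1, 0, 0; 0, 0, 1, 0; 0, 0, 0, 1] : Matrix (Fin 4) (Fin 4) ℤ).map
      (fun z => (z : ℝ)) * n x₁ x₂ x₃ x₄ x₅ x₆ = n x₁ (x₂ + 1) (x₃ + x₆) x₄ x₅ x₆ := by
  ext i j
  fin_cases i <;> fin_cases j <;>
    simp [n, Matrix.mul_apply, Fin.sum_univ_four]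

/-- The degenerate Whittaker vector on the full unipotent `N` of `SL(4)` with character on
the first simple root is obtained from the minimal-orbit Fourier coefficient by a Weyl
translate and unipotent integration (first identity of Table 3 / Appendix A). -/
theorem sl4_min_orbit_gives_first_whittaker
    (φ : Matrix (Fin 4) (Fin 4) ℝ → ℂ) (hcont : Continuous φ)
    (hinv : ∀ γ : Matrix (Fin 4) (Fin 4) ℤ, γ.det = 1 →
      ∀ g : Matrix (Fin 4) (Fin 4) ℝ, φ (γ.map (fun z => (z : ℝ)) * g) = φ g)
    (m : ℤ) (g : Matrix (Fin 4) (Fin 4) ℝ) :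
    (∫ u₆ in (0:ℝ)..1, ∫ u₅ in (0:ℝ)..1, ∫ u₄ in (0:ℝ)..1,
      ∫ u₃ in (0:ℝ)..1, ∫ u₂ in (0:ℝ)..1, ∫ x in (0:ℝ)..1,
        φ (n 0 0 x 0 0 0 * w.map (fun z => (z : ℝ)) * n 0 u₂ u₃ u₄ u₅ u₆ * g) *
          e (-(m : ℝ) * x)) =
      ∫ x₆ in (0:ℝ)..1, ∫ x₅ in (0:ℝ)..1, ∫ x₄ in (0:ℝ)..1,
        ∫ x₃ in (0:ℝ)..1, ∫ x₂ in (0:ℝ)..1, ∫ x₁ in (0:ℝ)..1,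
          φ (n x₁ x₂ x₃ x₄ x₅ x₆ * g) * e (-(m : ℝ) * x₁) := by
  have hw : ∀ x u₂ u₃ u₄ u₅ u₆ : ℝ,
      φ (n 0 0 x 0 0 0 * w.map (fun z => (z : ℝ)) * n 0 u₂ u₃ u₄ u₅ u₆ * g) =
        φ (n x (u₂ + x * u₄) (u₃ + x * u₅) u₄ u₅ u₆ * g) := fun x u₂ u₃ u₄ u₅ u₆ => by
    rw [weyl_conj, Matrix.mul_assoc, hinv w det_w]
  simp only [hw]
  congr 1; ext u₆
  congr 1; ext u₅
  congr 1; ext u₄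
  refine integral_shear_eq (F := fun x y z => φ (n x y z u₄ u₅ u₆ * g) * e (-(m : ℝ) * x))
    ?_ u₄ u₅ u₆ (fun x y z => ?_) (fun x y z => ?_)
  · exact (hcont.comp ((continuous_n_row_one u₄ u₅ u₆).matrix_mul continuous_const)).mul
      ((continuous_char m).comp continuous_fst)
  · rw [← elem14_mul, Matrix.mul_assoc, hinv _ (by decide)]
  · rw [← elem13_mul, Matrix.mul_assoc, hinv _ (by decide)]
end

section
/- Let φ : M₄(ℝ) → ℂ be continuous with φ(γ·g) = φ(g) for every g ∈ M₄(ℝ) and every integer 4×4 matrix γ of determinant 1, and let w₂ be the integer matrix with rows (0,1,0,0), (1,0,0,0), (0,0,0,1), (0,0,1,0). Then for every integer m and every g ∈ M₄(ℝ): ∫_{[0,1]⁵} ∫₀¹ φ( n(0,0,x,0,0,0) · w₂ · n(u₁,u₂,u₃,0,u₅,u₆) · g ) · e(−m·x) dx du₁ du₂ du₃ du₅ du₆ = ∫_{[0,1]⁶} φ( n(x₁,x₂,x₃,x₄,x₅,x₆) · g ) · e(−m·x₄) dx₁⋯dx₆. (The degenerate Whittaker vector on N with character on the second simple root expressed via the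 minimal-orbit Fourier coefficient; Table 3 / Appendix A.) -/
/-!
Put `F(x₁,…,x₆) = φ(n(x₁,…,x₆) g)`. Conjugation by `w₂` carries the `(1,4)` root subgroup to the
`(2,3)` root subgroup, so invariance under `w₂` and the product
`n(0,0,0,x,0,0) n(u₁,u₂,u₃,0,u₅,u₆) = n(u₁,u₂,u₃,x,u₅ + x u₆,u₆)` turn the left-hand integrand
into `F(u₁,u₂,u₃,x,u₅ + x u₆,u₆) e(-m x)` (`phi_conj`). Since `F` has period `1` in its fifth
variable (`phi_periodic`), the translation by `x u₆` disappears once `x` is moved outside the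
`u₅`-integral, which Fubini allows because all integrands are continuous on compact cubes.
-/

open MeasureTheory

/-- The Weyl element `w₂` as an integer matrix of determinant one. -/
def w₂ : Matrix (Fin 4) (Fin 4) ℤ :=
  !![0, 1, 0, 0; 1, 0, 0, 0; 0, 0, 0, 1; 0, 0, 1, 0]

lemma continuous_integral_unit {X : Type*} [TopologicalSpace X] {f : X → ℝ → ℂ}
    (hf : Continuous (fun p : X × ℝ => f p.1 p.2)) :
    Continuous (fun a => ∫ t in (0:ℝ)..1, f a t) :=
  intervalIntegral.continuous_parametric_intervalIntegral_of_continuous' hf 0 1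

lemma integral_unit_swap {f : ℝ → ℝ → ℂ} (hf : Continuous (fun p : ℝ × ℝ => f p.1 p.2)) :
    (∫ s in (0:ℝ)..1, ∫ t in (0:ℝ)..1, f s t) = ∫ t in (0:ℝ)..1, ∫ s in (0:ℝ)..1, f s t := by
  refine intervalIntegral_intervalIntegral_swap ?_
  exact (hf.continuousOn.integrableOn_compact (isCompact_uIcc.prod isCompact_uIcc)).mono_set
    (Set.prod_mono Set.uIoc_subset_uIcc Set.uIoc_subset_uIcc)

/-- Three-fold integral over the unit cube, the innermost variable being the first one. -/
noncomputable def cubeIntegral (h : ℝ → ℝ → ℝ → ℂ) : ℂ :=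
  ∫ c in (0:ℝ)..1, ∫ b in (0:ℝ)..1, ∫ a in (0:ℝ)..1, h a b c

lemma continuous_cubeIntegral {X : Type*} [TopologicalSpace X]
    {h : X → ℝ → ℝ → ℝ → ℂ}
    (hh : Continuous (fun p : X × ℝ × ℝ × ℝ => h p.1 p.2.1 p.2.2.1 p.2.2.2)) :
    Continuous (fun y => cubeIntegral (h y)) := by
  unfold cubeIntegral
  refine continuous_integral_unit (continuous_integral_unit (continuous_integral_unit ?_))
  exact hh.comp (f := fun p : ((X × ℝ) × ℝ) × ℝ => (p.1.1.1, p.2, p.1.2, p.1.1.2)) (by fun_prop)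

/-- Fubini: an integral over a further unit interval moves across the unit cube. -/
lemma cubeIntegral_integral {h : ℝ → ℝ → ℝ → ℝ → ℂ}
    (hh : Continuous (fun p : ℝ × ℝ × ℝ × ℝ => h p.1 p.2.1 p.2.2.1 p.2.2.2)) :
    cubeIntegral (fun a b c => ∫ x in (0:ℝ)..1, h x a b c) =
      ∫ x in (0:ℝ)..1, cubeIntegral (h x) := by
  unfold cubeIntegral
  have h1 : ∀ b c, (∫ a in (0:ℝ)..1, ∫ x in (0:ℝ)..1, h x a b c) =
      ∫ x in (0:ℝ)..1, ∫ a in (0:ℝ)..1, h x a b c := fun b c => integral_unit_swap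
    (hh.comp (f := fun p : ℝ × ℝ => (p.2, p.1, b, c)) (by fun_prop))
  have h2 : ∀ c, (∫ b in (0:ℝ)..1, ∫ x in (0:ℝ)..1, ∫ a in (0:ℝ)..1, h x a b c) =
      ∫ x in (0:ℝ)..1, ∫ b in (0:ℝ)..1, ∫ a in (0:ℝ)..1, h x a b c :=
    fun c => integral_unit_swap (continuous_integral_unit
      (hh.comp (f := fun p : (ℝ × ℝ) × ℝ => (p.1.2, p.2, p.1.1, c)) (by fun_prop)))
  simp only [h1, h2]
  exact integral_unit_swap (continuous_integral_unit (continuous_integral_unit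
    (hh.comp (f := fun p : ((ℝ × ℝ) × ℝ) × ℝ => (p.1.1.2, p.2, p.1.2, p.1.1.1)) (by fun_prop))))

/-- Translations depending on `x` disappear from the double integral over `x` and a variable in
which the integrand is `1`-periodic. -/
lemma integral_shear {H : ℝ → ℝ → ℂ} (hH : Continuous (fun p : ℝ × ℝ => H p.1 p.2))
    (hper : ∀ x t, H x (t + 1) = H x t) (s : ℝ) :
    (∫ t in (0:ℝ)..1, ∫ x in (0:ℝ)..1, H x (t + x * s)) =
      ∫ t in (0:ℝ)..1, ∫ x in (0:ℝ)..1, H x t := by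
  rw [integral_unit_swap (f := fun t x => H x (t + x * s))
      (hH.comp (f := fun p : ℝ × ℝ => (p.2, p.1 + p.2 * s)) (by fun_prop)),
    integral_unit_swap (f := fun t x => H x t) (hH.comp continuous_swap)]
  refine intervalIntegral.integral_congr fun x _ => ?_
  have hp : Function.Periodic (H x) 1 := hper x
  have h0 := hp.intervalIntegral_add_eq (x * s) 0
  simp only [intervalIntegral.integral_comp_add_right, zero_add] at h0 ⊢
  rw [add_comm 1]
  exact h0

lemma continuous_n : Continuous (fun p : ℝ × ℝ × ℝ × ℝ × ℝ × ℝ =>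
    n p.1 p.2.1 p.2.2.1 p.2.2.2.1 p.2.2.2.2.1 p.2.2.2.2.2) := by
  refine continuous_matrix fun i j => ?_
  fin_cases i <;> fin_cases j <;> simp [n] <;> fun_prop

/-- Conjugation by `w₂` moves the `(1,4)` root subgroup to the `(2,3)` root subgroup, and invariance
under `w₂` removes the Weyl element. -/
lemma phi_conj
    {φ : Matrix (Fin 4) (Fin 4) ℝ → ℂ}
    (hinv : ∀ γ : Matrix (Fin 4) (Fin 4) ℤ, γ.det = 1 →
      ∀ g : Matrix (Fin 4) (Fin 4) ℝ, φ (γ.map (fun z => (z : ℝ)) * g) = φ g)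
    (x u₁ u₂ u₃ u₅ u₆ : ℝ) (g : Matrix (Fin 4) (Fin 4) ℝ) :
    φ (n 0 0 x 0 0 0 * w₂.map (fun z => (z : ℝ)) * n u₁ u₂ u₃ 0 u₅ u₆ * g) =
      φ (n u₁ u₂ u₃ x (u₅ + x * u₆) u₆ * g) := by
  have hdet : w₂.det = 1 := by decide
  have hmul : n 0 0 x 0 0 0 * w₂.map (fun z => (z : ℝ)) * n u₁ u₂ u₃ 0 u₅ u₆ =
      w₂.map (fun z => (z : ℝ)) * n u₁ u₂ u₃ x (u₅ + x * u₆) u₆ := by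
    ext i j
    fin_cases i <;> fin_cases j <;>
      simp [n, w₂, Matrix.mul_apply, Matrix.vecMul, dotProduct, Fin.sum_univ_four]
  rw [hmul, Matrix.mul_assoc, hinv w₂ hdet]

/-- Invariance under the integer elementary matrix `1 + E₂₄`, which shifts only the `(2,4)` entry. -/
lemma phi_periodic
    {φ : Matrix (Fin 4) (Fin 4) ℝ → ℂ}
    (hinv : ∀ γ : Matrix (Fin 4) (Fin 4) ℤ, γ.det = 1 →
      ∀ g : Matrix (Fin 4) (Fin 4) ℝ, φ (γ.map (fun z => (z : ℝ)) * g) = φ g)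
    (x₁ x₂ x₃ x₄ x₅ x₆ : ℝ) (g : Matrix (Fin 4) (Fin 4) ℝ) :
    φ (n x₁ x₂ x₃ x₄ (x₅ + 1) x₆ * g) = φ (n x₁ x₂ x₃ x₄ x₅ x₆ * g) := by
  let γ : Matrix (Fin 4) (Fin 4) ℤ := !![1, 0, 0, 0; 0, 1, 0, 1; 0, 0, 1, 0; 0, 0, 0, 1]
  have hdet : γ.det = 1 := by decide
  have hmul : n x₁ x₂ x₃ x₄ (x₅ + 1) x₆ =
      γ.map (fun z => (z : ℝ)) * n x₁ x₂ x₃ x₄ x₅ x₆ := by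
    ext i j
    fin_cases i <;> fin_cases j <;> simp [n, γ, Matrix.mul_apply, Fin.sum_univ_four]
  rw [hmul, Matrix.mul_assoc, hinv γ hdet]

/-- The degenerate Whittaker vector on `N` with character on the second simple root,
expressed via the minimal-orbit Fourier coefficient (Table 3 / Appendix A). -/
theorem sl4_min_orbit_gives_second_whittaker
    (φ : Matrix (Fin 4) (Fin 4) ℝ → ℂ) (hcont : Continuous φ)
    (hinv : ∀ γ : Matrix (Fin 4) (Fin 4) ℤ, γ.det = 1 →
      ∀ g : Matrix (Fin 4) (Fin 4) ℝ, φ (γ.map (fun z => (z : ℝ)) * g) = φ g)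
    (m : ℤ) (g : Matrix (Fin 4) (Fin 4) ℝ) :
    (∫ u₆ in (0:ℝ)..1, ∫ u₅ in (0:ℝ)..1, ∫ u₃ in (0:ℝ)..1,
      ∫ u₂ in (0:ℝ)..1, ∫ u₁ in (0:ℝ)..1, ∫ x in (0:ℝ)..1,
        φ (n 0 0 x 0 0 0 * w₂.map (fun z => (z : ℝ)) * n u₁ u₂ u₃ 0 u₅ u₆ * g) *
          e (-(m : ℝ) * x)) =
      ∫ x₆ in (0:ℝ)..1, ∫ x₅ in (0:ℝ)..1, ∫ x₄ in (0:ℝ)..1,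
        ∫ x₃ in (0:ℝ)..1, ∫ x₂ in (0:ℝ)..1, ∫ x₁ in (0:ℝ)..1,
          φ (n x₁ x₂ x₃ x₄ x₅ x₆ * g) * e (-(m : ℝ) * x₄) := by
  refine intervalIntegral.integral_congr fun s _ => ?_
  simp only [phi_conj hinv]
  have he : Continuous e := by unfold e; fun_prop
  have hF : Continuous (fun p : (ℝ × ℝ) × ℝ × ℝ × ℝ =>
      φ (n p.2.1 p.2.2.1 p.2.2.2 p.1.1 p.1.2 s * g) * e (-(m : ℝ) * p.1.1)) := by
    have hn : Continuous (fun p : (ℝ × ℝ) × ℝ × ℝ × ℝ =>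
        n p.2.1 p.2.2.1 p.2.2.2 p.1.1 p.1.2 s) :=
      continuous_n.comp (f := fun p : (ℝ × ℝ) × ℝ × ℝ × ℝ =>
        (p.2.1, p.2.2.1, p.2.2.2, p.1.1, p.1.2, s)) (by fun_prop)
    exact (hcont.comp (hn.mul continuous_const)).mul (he.comp (by fun_prop))
  -- with `x₆ = s` fixed, `H x t` is the integral over `(x₁,x₂,x₃)` at `x₄ = x`, `x₅ = t`
  have hshear := integral_shear
    (H := fun x t => cubeIntegral fun a b c => φ (n a b c x t s * g) * e (-(m : ℝ) * x))
    (continuous_cubeIntegral (X := ℝ × ℝ)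
      (h := fun y a b c => φ (n a b c y.1 y.2 s * g) * e (-(m : ℝ) * y.1)) hF)
    (fun x t => by simp only [phi_periodic hinv]) s
  refine Eq.trans (intervalIntegral.integral_congr fun t _ => ?_) hshear
  exact cubeIntegral_integral
    (h := fun x a b c => φ (n a b c x (t + x * s) s * g) * e (-(m : ℝ) * x))
    (hF.comp (f := fun p : ℝ × ℝ × ℝ × ℝ => ((p.1, t + p.1 * s), p.2)) (by fun_prop))
end

section
/- Let φ : M₄(ℝ) → ℂ be continuous with φ(γ·g) = φ(g) for every g ∈ M₄(ℝ) and every integer 4×4 matrix γ of determinant 1, and let w₄ be the integer matrix with rows (1,0,0,0), (0,1,0,0), (0,0,0,−1), (0,0,1,0). Then for every integer m and every g ∈ M₄(ℝ): ∫_{[0,1]²} ∫₀¹ φ( n(0,0,x,0,0,0) · w₄ · n′(0,u₂,u₃) · g ) · e(−m·x) dx du₂ du₃ = ∫_{[0,1]³} φ( n′(x₁,x₂,x₃) · g ) · e(−m·x₁) dx₁ dx₂ dx₃. (The Whittaker vector on the abelianized unipotent N′ = [N,N] with character on the (1,3)-entry expressed via the minimal-orbit Fourier coefficient; Table 3 /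 Appendix A.) -/
open MeasureTheory

/-- The `4×4` matrix with rows `(1,0,x₁,x₂)`, `(0,1,0,x₃)`, `(0,0,1,0)`, `(0,0,0,1)`,
parametrizing `N′ = [N,N]`. -/
noncomputable def n' (x₁ x₂ x₃ : ℝ) : Matrix (Fin 4) (Fin 4) ℝ :=
  !![1, 0, x₁, x₂; 0, 1, 0, x₃; 0, 0, 1, 0; 0, 0, 0, 1]

/-- The Weyl element `w₄` as an integer matrix of determinant one. -/
def w₄ : Matrix (Fin 4) (Fin 4) ℤ :=
  !![1, 0, 0, 0; 0, 1, 0, 0; 0, 0, 0, -1; 0, 0, 1, 0]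

/-- Conjugating by the Weyl element moves the `(1,4)` root subgroup to the `(1,3)` one, with no
sign: `n(x) w₄ = w₄ n'(x,0,0)`. Since `N'` is abelian and additive in its coordinates, the
remaining factor is absorbed. -/
theorem n_mul_w₄_mul_n' (x u₂ u₃ : ℝ) :
    n 0 0 x 0 0 0 * w₄.map (fun z => (z : ℝ)) * n' 0 u₂ u₃ =
      w₄.map (fun z => (z : ℝ)) * n' x u₂ u₃ := by
  ext i j
  fin_cases i <;> fin_cases j <;>
    simp [n, n', w₄, Matrix.mul_apply, Matrix.vecMul, dotProduct, Fin.sum_univ_four]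

theorem det_w₄ : w₄.det = 1 := by decide

/-- The Whittaker vector on the abelianized unipotent `N′ = [N,N]` with character on the
`(1,3)`-entry, expressed via the minimal-orbit Fourier coefficient
(Table 3 / Appendix A). -/
theorem sl4_min_orbit_gives_Nprime_13_whittaker
    (φ : Matrix (Fin 4) (Fin 4) ℝ → ℂ) (hcont : Continuous φ)
    (hinv : ∀ γ : Matrix (Fin 4) (Fin 4) ℤ, γ.det = 1 →
      ∀ g : Matrix (Fin 4) (Fin 4) ℝ, φ (γ.map (fun z => (z : ℝ)) * g) = φ g)
    (m : ℤ) (g : Matrix (Fin 4) (Fin 4) ℝ) :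
    (∫ u₃ in (0:ℝ)..1, ∫ u₂ in (0:ℝ)..1, ∫ x in (0:ℝ)..1,
        φ (n 0 0 x 0 0 0 * w₄.map (fun z => (z : ℝ)) * n' 0 u₂ u₃ * g) *
          e (-(m : ℝ) * x)) =
      ∫ x₃ in (0:ℝ)..1, ∫ x₂ in (0:ℝ)..1, ∫ x₁ in (0:ℝ)..1,
        φ (n' x₁ x₂ x₃ * g) * e (-(m : ℝ) * x₁) := by
  -- The integrands agree pointwise: `w₄` is moved to the far left and removed by invariance.
  simp only [n_mul_w₄_mul_n', Matrix.mul_assoc _ (n' _ _ _) g, hinv w₄ det_w₄]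
end
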